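/- Let L ≥ 2. For any sites u < v and u' < v' in {1,…,L}, the operators exp(iπ Sᶻ_u Sˣ_v) and exp(iπ Sᶻ_{u'} Sˣ_{v'}) on (ℂ³)^{⊗L} commute; in particular the product defining the Kennedy–Tasaki transformation U_KT = ∏_{1≤u<v≤L} exp(iπ Sᶻ_u Sˣ_v) is independent of the ordering of its factors. -/

import Mathlib

noncomputable section
open Complex Matrix

/-- The Hilbert space operators of the `L`-site spin-1 chain: matrices on `(ℂ³)^{⊗L}`,
with the tensor factors indexed by sites and the single-site ordered basis `(|+⟩,|0⟩,|−⟩)`. -/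
abbrev Op (L : ℕ) : Type := Matrix (Fin L → Fin 3) (Fin L → Fin 3) ℂ

/-- The spin-1 matrix `Sˣ`. -/
def Sx : Matrix (Fin 3) (Fin 3) ℂ :=
  ((Real.sqrt 2 : ℝ) : ℂ)⁻¹ • !![0, 1, 0; 1, 0, 1; 0, 1, 0]

/-- The spin-1 matrix `Sʸ`. -/
def Sy : Matrix (Fin 3) (Fin 3) ℂ :=
  ((Real.sqrt 2 : ℝ) : ℂ)⁻¹ • !![0, -I, 0; I, 0, -I; 0, I, 0]

/-- The spin-1 matrix `Sᶻ = diag(1,0,−1)`. -/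
def Sz : Matrix (Fin 3) (Fin 3) ℂ := !![1, 0, 0; 0, 0, 0; 0, 0, -1]

/-- `site A j` is the one-site operator `A` acting on site `j` and identity elsewhere. -/
def site {L : ℕ} (A : Matrix (Fin 3) (Fin 3) ℂ) (j : Fin L) : Op L :=
  Matrix.of fun f g => ∏ k : Fin L, if k = j then A (f k) (g k) else (if f k = g k then 1 else 0)

/-- One factor `exp(iπ Sᶻ_u Sˣ_v)` of the Kennedy–Tasaki transformation. -/
def ktFactor {L : ℕ} (u v : Fin L) : Op L :=
  NormedSpace.exp (((Real.pi : ℂ) * I) • (site Sz u * site Sx v))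

/-- The Kennedy–Tasaki transformation `U_KT = ∏_{1 ≤ u < v ≤ L} exp(iπ Sᶻ_u Sˣ_v)`
(the factors pairwise commute, so the ordering is immaterial). -/
def UKT (L : ℕ) : Op L :=
  ((List.finRange L).map fun u =>
    ((List.finRange L).map fun v => if u < v then ktFactor u v else 1).prod).prod

/-- The p-wave basis vector `|↑⟩ = (|+⟩ − |−⟩)/√2`. -/
def up : Fin 3 → ℂ := ![((Real.sqrt 2 : ℝ) : ℂ)⁻¹, 0, -((Real.sqrt 2 : ℝ) : ℂ)⁻¹]

/-- The p-wave basis vector `|↓⟩ = |0⟩`. -/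
def down : Fin 3 → ℂ := ![0, 1, 0]

/-- The p-wave basis vector `|h⟩ = (|+⟩ + |−⟩)/√2`. -/
def hole : Fin 3 → ℂ := ![((Real.sqrt 2 : ℝ) : ℂ)⁻¹, 0, ((Real.sqrt 2 : ℝ) : ℂ)⁻¹]

/-- The rank-one operator `|a⟩⟨b|`. -/
def ketbra (a b : Fin 3 → ℂ) : Matrix (Fin 3) (Fin 3) ℂ := Matrix.vecMulVec a (star b)

/-- `σˣ = |↑⟩⟨↓| + |↓⟩⟨↑|` (annihilating `|h⟩`). -/
def sigx : Matrix (Fin 3) (Fin 3) ℂ := ketbra up down + ketbra down up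

/-- `σʸ = −i|↑⟩⟨↓| + i|↓⟩⟨↑|` (annihilating `|h⟩`). -/
def sigy : Matrix (Fin 3) (Fin 3) ℂ := (-I) • ketbra up down + I • ketbra down up

/-- `σᶻ = |↑⟩⟨↑| − |↓⟩⟨↓|` (annihilating `|h⟩`). -/
def sigz : Matrix (Fin 3) (Fin 3) ℂ := ketbra up up - ketbra down down

/-- `n = |↑⟩⟨↑| + |↓⟩⟨↓|` (annihilating `|h⟩`). -/
def nMat : Matrix (Fin 3) (Fin 3) ℂ := ketbra up up + ketbra down down

/-- `h = |h⟩⟨h|`. -/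
def hMat : Matrix (Fin 3) (Fin 3) ℂ := ketbra hole hole

/-- `P = ⊗_{j=1}^L n_j`, the orthogonal projection onto the hole-free subspace. -/
def Pproj (L : ℕ) : Op L := Matrix.of fun f g => ∏ k : Fin L, nMat (f k) (g k)

/-- The Heisenberg coupling `S_j · S_k`. -/
def heis {L : ℕ} (j k : Fin L) : Op L :=
  site Sx j * site Sx k + site Sy j * site Sy k + site Sz j * site Sz k

/-- The bilinear-biquadratic Hamiltonian
`H_BLBQ(θ) = Σ_{j=1}^{L−1} [cosθ (S_j·S_{j+1}) + sinθ (S_j·S_{j+1})²]`. -/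
def HBLBQ (L : ℕ) (θ : ℝ) : Op L :=
  ∑ j : Fin L, if h : (j : ℕ) + 1 < L then
    ((Real.cos θ : ℝ) : ℂ) • heis j ⟨(j : ℕ) + 1, h⟩
      + ((Real.sin θ : ℝ) : ℂ) • (heis j ⟨(j : ℕ) + 1, h⟩) ^ 2
  else 0

/-- The self-dual Hamiltonian `H_SD(θ) = H_BLBQ(θ) + U_KT H_BLBQ(θ) U_KT`. -/
def HSD (L : ℕ) (θ : ℝ) : Op L := HBLBQ L θ + UKT L * HBLBQ L θ * UKT L

/-- The spin-1/2 XXZ Hamiltonian written in the p-wave basis: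
`H_XXZ(θ) = (cosθ−sinθ) Σ_j (−σˣ_jσˣ_{j+1} + σʸ_jσʸ_{j+1}) + sinθ Σ_j σᶻ_jσᶻ_{j+1}`. -/
def HXXZ (L : ℕ) (θ : ℝ) : Op L :=
  ((Real.cos θ - Real.sin θ : ℝ) : ℂ) •
    (∑ j : Fin L, if h : (j : ℕ) + 1 < L then
      -(site sigx j * site sigx ⟨(j : ℕ) + 1, h⟩) + site sigy j * site sigy ⟨(j : ℕ) + 1, h⟩
    else 0)
  + ((Real.sin θ : ℝ) : ℂ) •
    (∑ j : Fin L, if h : (j : ℕ) + 1 < L then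
      site sigz j * site sigz ⟨(j : ℕ) + 1, h⟩
    else 0)

/-- The global product `∏_{j=1}^L exp(c • A_j)` of commuting single-site exponentials. -/
def globalProd (L : ℕ) (A : Matrix (Fin 3) (Fin 3) ℂ) (c : ℂ) : Op L :=
  ((List.finRange L).map fun j => NormedSpace.exp (c • site A j)).prod

/-- The symmetry flux `F^y_j = exp(−iπ Σ_{k<j} Sʸ_k) · Sʸ_j`. -/
def fluxY (L : ℕ) (j : Fin L) : Op L :=
  NormedSpace.exp ((-((Real.pi : ℂ) * I)) •
    ∑ k : Fin L, if (k : ℕ) < (j : ℕ) then site Sy k else 0) * site Sy j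


/-- Elementary tensor of one-site operators. -/
def tens {L : ℕ} (M : Fin L → Matrix (Fin 3) (Fin 3) ℂ) : Op L :=
  Matrix.of fun f g => ∏ k, M k (f k) (g k)

lemma tens_mul {L : ℕ} (M N : Fin L → Matrix (Fin 3) (Fin 3) ℂ) :
    tens M * tens N = tens (M * N) := by
  ext f g
  simp only [tens, Matrix.mul_apply, Matrix.of_apply, Pi.mul_apply, ← Finset.prod_mul_distrib]
  rw [Finset.prod_univ_sum]
  simp

lemma site_eq {L : ℕ} (A : Matrix (Fin 3) (Fin 3) ℂ) (j : Fin L) :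
    site A j = tens (Pi.mulSingle j A) := by
  ext f g
  simp only [site, tens, Matrix.of_apply]
  refine Finset.prod_congr rfl fun k _ => ?_
  by_cases h : k = j
  · subst h; simp
  · simp [h, Matrix.one_apply]

lemma site_mul {L : ℕ} (A B : Matrix (Fin 3) (Fin 3) ℂ) (j : Fin L) :
    site A j * site B j = site (A * B) j := by
  rw [site_eq, site_eq, site_eq, tens_mul, Pi.mulSingle_mul]

lemma site_comm {L : ℕ} (A B : Matrix (Fin 3) (Fin 3) ℂ) {i j : Fin L} (h : i ≠ j) :
    Commute (site A i) (site B j) := by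
  unfold Commute SemiconjBy
  rw [site_eq, site_eq, tens_mul, tens_mul]
  congr 1
  exact Pi.mulSingle_commute (f := fun _ => Matrix (Fin 3) (Fin 3) ℂ) h A B

lemma site_comm_of_commute {L : ℕ} {A B : Matrix (Fin 3) (Fin 3) ℂ} (hAB : Commute A B)
    (i j : Fin L) : Commute (site A i) (site B j) := by
  by_cases h : i = j
  · subst h
    unfold Commute SemiconjBy
    rw [site_mul, site_mul, hAB.eq]
  · exact site_comm A B h

lemma exp_smul_idem {𝔸 : Type*} [NormedRing 𝔸] [NormedAlgebra ℂ 𝔸] [CompleteSpace 𝔸]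
    (E : 𝔸) (hE : E * E = E) (c : ℂ) :
    NormedSpace.exp (c • E) = 1 + (Complex.exp c - 1) • E := by
  have h1 := NormedSpace.exp_series_hasSum_exp' (𝕂 := ℂ) (c • E)
  have h2 := (NormedSpace.exp_series_hasSum_exp' (𝕂 := ℂ) c).smul_const E
  have h3 := h2.add (hasSum_ite_eq (0 : ℕ) (1 - E))
  have h5 : ∀ n : ℕ, ((n.factorial : ℂ)⁻¹) • (c • E) ^ n
      = ((n.factorial : ℂ)⁻¹ • c ^ n) • E + if n = 0 then 1 - E else 0 := by
    intro n
    cases n with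
    | zero => simp
    | succ n =>
      have : E ^ (n + 1) = E := IsIdempotentElem.pow_succ_eq n hE
      rw [smul_pow, this, if_neg (Nat.succ_ne_zero n), add_zero, smul_assoc]
  have h4 := h1.unique (by simpa only [h5] using h3)
  rw [h4, ← Complex.exp_eq_exp_ℂ, sub_smul, one_smul]; abel

lemma exp_pi_smul {𝔸 : Type*} [NormedRing 𝔸] [NormedAlgebra ℂ 𝔸] [CompleteSpace 𝔸]
    (A : 𝔸) (hA : A * A * A = A) :
    NormedSpace.exp (((Real.pi : ℂ) * I) • A) = 1 - (2 : ℂ) • (A * A) := by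
  have hA4 : A * A * (A * A) = A * A := by rw [← mul_assoc, hA]
  have hA3 : A * (A * A) = A := by rw [← mul_assoc, hA]
  set E : 𝔸 := (2⁻¹ : ℂ) • (A * A - A) with hEdef
  have hE : E * E = E := by
    rw [hEdef, smul_mul_smul_comm, mul_sub, sub_mul, sub_mul, hA4, hA3, hA]
    module
  have hdec : ((Real.pi : ℂ) * I) • A = ((Real.pi : ℂ) * I) • (A * A) +
      (-(2 * (Real.pi : ℂ) * I)) • E := by
    rw [hEdef]; module
  have hc : Commute (A * A) E := by
    unfold Commute SemiconjBy
    rw [hEdef, mul_smul_comm, smul_mul_assoc, mul_sub, sub_mul, hA, hA3]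
  have hc' : Commute (((Real.pi : ℂ) * I) • (A * A)) ((-(2 * (Real.pi : ℂ) * I)) • E) :=
    (hc.smul_left _).smul_right _
  letI : NormedAlgebra ℚ 𝔸 := NormedAlgebra.restrictScalars ℚ ℂ 𝔸
  rw [hdec, NormedSpace.exp_add_of_commute hc', exp_smul_idem _ hA4, exp_smul_idem _ hE,
    Complex.exp_neg, Complex.exp_two_pi_mul_I, Complex.exp_pi_mul_I]
  simp only [inv_one, sub_self, zero_smul, add_zero, mul_one]
  module

section
attribute [local instance] Matrix.linftyOpNormedRing Matrix.linftyOpNormedAlgebra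

lemma exp_pi_smul_op {L : ℕ} (A : Op L) (hA : A * A * A = A) :
    NormedSpace.exp (((Real.pi : ℂ) * I) • A) = 1 - (2 : ℂ) • (A * A) :=
  exp_pi_smul A hA
end

lemma sqrt_two_inv_mul : ((Real.sqrt 2 : ℝ) : ℂ)⁻¹ * ((Real.sqrt 2 : ℝ) : ℂ)⁻¹ = 2⁻¹ := by
  rw [← mul_inv, ← Complex.ofReal_mul, Real.mul_self_sqrt (by norm_num)]; norm_num

lemma Sx_sq : Sx * Sx = !![2⁻¹, 0, 2⁻¹; 0, 1, 0; 2⁻¹, 0, 2⁻¹] := by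
  rw [Sx, smul_mul_smul_comm, sqrt_two_inv_mul]
  ext i j
  fin_cases i <;> fin_cases j <;> simp [Matrix.mul_apply, Fin.sum_univ_three] <;> norm_num

lemma Sx_cube : Sx * Sx * Sx = Sx := by
  rw [Sx_sq, Sx, mul_smul_comm]
  congr 1
  ext i j
  fin_cases i <;> fin_cases j <;> simp [Matrix.mul_apply, Fin.sum_univ_three] <;> norm_num

lemma Sz_sq : Sz * Sz = !![1, 0, 0; 0, 0, 0; 0, 0, 1] := by
  ext i j
  fin_cases i <;> fin_cases j <;> simp [Sz, Matrix.mul_apply, Fin.sum_univ_three]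

lemma Sz_cube : Sz * Sz * Sz = Sz := by
  rw [Sz_sq, Sz]
  ext i j
  fin_cases i <;> fin_cases j <;> simp [Matrix.mul_apply, Fin.sum_univ_three]

lemma Sz_sq_comm_Sx_sq : Commute (Sz * Sz) (Sx * Sx) := by
  rw [Sx_sq, Sz_sq]
  unfold Commute SemiconjBy
  ext i j
  fin_cases i <;> fin_cases j <;> simp [Matrix.mul_apply, Fin.sum_univ_three]

lemma ktFactor_eq {L : ℕ} {u v : Fin L} (h : u ≠ v) :
    ktFactor u v = 1 - (2 : ℂ) • (site (Sz * Sz) u * site (Sx * Sx) v) := by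
  have hsq : (site Sz u * site Sx v) * (site Sz u * site Sx v)
      = site (Sz * Sz) u * site (Sx * Sx) v := by
    rw [(site_comm Sx Sz h.symm).mul_mul_mul_comm, site_mul, site_mul]
  rw [ktFactor, exp_pi_smul_op, hsq]
  rw [hsq, (site_comm (Sx * Sx) Sz h.symm).mul_mul_mul_comm, site_mul, site_mul, Sz_cube, Sx_cube]

lemma ktFactor_commute {L : ℕ} {u v u' v' : Fin L} (h : u < v) (h' : u' < v') :
    Commute (ktFactor u v) (ktFactor u' v') := by
  rw [ktFactor_eq h.ne, ktFactor_eq h'.ne]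
  have key : Commute (site (Sz * Sz) u * site (Sx * Sx) v)
      (site (Sz * Sz) u' * site (Sx * Sx) v') :=
    Commute.mul_left
      ((site_comm_of_commute (Commute.refl _) _ _).mul_right
        (site_comm_of_commute Sz_sq_comm_Sx_sq _ _))
      ((site_comm_of_commute Sz_sq_comm_Sx_sq.symm _ _).mul_right
        (site_comm_of_commute (Commute.refl _) _ _))
  exact ((Commute.one_left _).sub_left
    (((Commute.one_right _).sub_right ((key.smul_left _).smul_right _))))

/-- The factors `exp(iπ Sᶻ_u Sˣ_v)` (for `u < v` and `u' < v'`) pairwise commute;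
in particular the product defining the Kennedy–Tasaki transformation is independent of the
ordering of its factors. -/
theorem ktFactor_commute_and_prod_perm_invariant (L : ℕ) (hL : 2 ≤ L) :
    (∀ u v u' v' : Fin L, u < v → u' < v' → Commute (ktFactor u v) (ktFactor u' v')) ∧
      (∀ l₁ l₂ : List (Fin L × Fin L), (∀ p ∈ l₁, p.1 < p.2) → l₁.Perm l₂ →
        (l₁.map fun p => ktFactor p.1 p.2).prod = (l₂.map fun p => ktFactor p.1 p.2).prod) := by
  refine ⟨fun u v u' v' h h' => ktFactor_commute h h', fun l₁ l₂ hl hp => ?_⟩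
  refine (hp.map _).prod_eq' ?_
  rw [List.pairwise_map]
  exact List.pairwise_of_forall_mem_list fun a ha b hb => ktFactor_commute (hl a ha) (hl b hb)

end
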